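/- arXiv:2301.05811 — 2 statements merged into one kernel-verified Lean document; each statement's English description precedes it below -/
import Mathlib

section
/- There is an absolute constant C > 0 such that the following holds. Let ε ∈ (0,1), let L be a positive integer, and let a, b ∈ ℝⁿ be nonzero vectors such that (a[i]/‖a‖)² and (b[i]/‖b‖)² are integer multiples of 1/L for every i. Set u = a/‖a‖ and v = b/‖b‖, with expanded supports Ū and V̄ in {1,...,n}×{1,...,L}. Let m ≥ C/ε² be an integer and let h¹,...,hᵐ be mutually independent uniform hash families on {1,...,n}×{1,...,L}. For each i, let ℓ_U^i and ℓ_V^i be the (almost surely unique) minimizers of hⁱ over Ū and over V̄, with block indices j_U^i and j_V^i; define Z_i = 1[hⁱ(ℓ_U^i) = hⁱ(ℓ_V^i)] · u[j_U^i]·v[j_V^i] / min(u[j_U^i]², v[j_V^i]²), define M̃ = (1/L)·(m / ∑_{i=1}^{m} min(hⁱ(ℓ_U^i), hⁱ(ℓ_V^i)) − 1), and define the estimate F = ‖a‖·‖b‖·(M̃/m)·∑_{i=1}^{m} Z_i. Then with probability at least 2/3, |F − ⟨a,b⟩| ≤ ε · max(‖a_I‖·‖b‖, ‖a‖·‖b_I‖),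 where I = supp(a) ∩ supp(b). -/
open MeasureTheory Finset
open scoped ENNReal

/-- The product measure on `J → ℝ` in which each coordinate is an independent
uniform random variable on `[0,1]`: a uniform hash family on `J`. -/
noncomputable def uniformHash (J : Type*) [Fintype J] : Measure (J → ℝ) :=
  Measure.pi fun _ : J => (volume : Measure ℝ).restrict (Set.Icc 0 1)

/-- A minimizer of `f` over the nonempty finite set `s` (the minimizer of a uniform
hash family over a nonempty set is almost surely unique). -/
noncomputable def argminOn {α : Type*} (s : Finset α) (hs : s.Nonempty) (f : α → ℝ) : α :=
  (s.exists_min_image f hs).choose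

/-- The expanded support of a vector `u` with discretization parameter `L`:
`Ū = {(i,k) ∈ {1,...,n} × {1,...,L} : k ≤ u[i]² ⬝ L}`, so that the block
`{i} × {1,...,L}` contributes exactly `u[i]² ⬝ L` elements when `u[i]²` is an
integer multiple of `1/L`.  (Here `Fin L` represents `{1,...,L}` via `k ↦ k+1`.) -/
noncomputable def expandedSupport {n : ℕ} (L : ℕ) (u : Fin n → ℝ) :
    Finset (Fin n × Fin L) :=
  Finset.univ.filter fun p => ((p.2 : ℕ) + 1 : ℝ) ≤ (u p.1) ^ 2 * L

/-- The weighted MinHash random variable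
`Z = 1[h(ℓ_U) = h(ℓ_V)] ⬝ u[j_U] v[j_V] / min(u[j_U]², v[j_V]²)`, where `ℓ_U`, `ℓ_V` are
the minimizers of the hash `h` over the expanded supports `Ū`, `V̄`, with block indices
`j_U = ℓ_U.1`, `j_V = ℓ_V.1`. -/
noncomputable def Zw {n L : ℕ} (u v : Fin n → ℝ)
    (hU : (expandedSupport L u).Nonempty) (hV : (expandedSupport L v).Nonempty)
    (h : Fin n × Fin L → ℝ) : ℝ :=
  (if h (argminOn (expandedSupport L u) hU h) = h (argminOn (expandedSupport L v) hV h)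
      then (1 : ℝ) else 0) *
    (u (argminOn (expandedSupport L u) hU h).1 * v (argminOn (expandedSupport L v) hV h).1 /
      min ((u (argminOn (expandedSupport L u) hU h).1) ^ 2)
        ((v (argminOn (expandedSupport L v) hV h).1) ^ 2))

/-- `m` mutually independent uniform hash families on `J`. -/
noncomputable def hashFamilies (m : ℕ) (J : Type*) [Fintype J] :
    Measure (Fin m → J → ℝ) :=
  Measure.pi fun _ : Fin m => uniformHash J

/-- The Euclidean norm `‖x‖ = √(∑ i, x i ^ 2)` of a vector `x : Fin n → ℝ`. -/
noncomputable def vnorm {n : ℕ} (x : Fin n → ℝ) : ℝ :=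
  Real.sqrt (∑ i, (x i) ^ 2)

/-- `‖x_S‖`: the Euclidean norm of the vector `x` restricted to the index set `S`
(agreeing with `x` on `S` and zero elsewhere). -/
noncomputable def vnormOn {n : ℕ} (S : Finset (Fin n)) (x : Fin n → ℝ) : ℝ :=
  Real.sqrt (∑ i ∈ S, (x i) ^ 2)

/-- The support `{i : x i ≠ 0}` of a vector, as a `Finset`. -/
noncomputable def supp {n : ℕ} (x : Fin n → ℝ) : Finset (Fin n) :=
  Finset.univ.filter fun i => x i ≠ 0

open ProbabilityTheory

/-!
For unit vectors `u`, `v` the expanded supports have `L` elements each, so `N = |Ū ∪ V̄|` lies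
between `L` and `2 L`. The smallest hash value on `Ū ∪ V̄` has mean `1 / (N + 1)` and standard
deviation at most `1 / (N + 1)`, so `M̃` estimates `N / L` up to a relative error of order `ε`.

The minimizer over `Ū ∪ V̄` is uniform, and the hashes collide exactly when it lies in `Ū ∩ V̄`.
This intersection has `L min(u[i]², v[i]²)` elements in block `i`, which cancels the denominator of
`Z`: the mean is `E Z = (L / N) ⟨u, v⟩`, and `E Z² ≤ ∑ max(u[i]², v[i]²)` over the common support,
which is at most `‖u_I‖² + ‖v_I‖²`. Chebyshev's inequality controls both averages, and a union
bound and rescaling by `‖a‖ ‖b‖` conclude.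
-/

section Probability

variable {Ω α ι : Type*} [MeasurableSpace Ω] {μ : Measure Ω}

theorem ae_ne_of_indepFun [MeasurableSpace α] [MeasurableEq α] [IsFiniteMeasure μ] {X Y : Ω → α}
    (hX : AEMeasurable X μ) (hY : AEMeasurable Y μ) (hXY : IndepFun X Y μ)
    [NullSingletonClass (μ.map Y)] : ∀ᵐ ω ∂μ, X ω ≠ Y ω := by
  have hmap := (indepFun_iff_map_prod_eq_prod_map_map hX hY).1 hXY
  have hdiag : ∀ᵐ p ∂μ.map fun ω ↦ (X ω, Y ω), p.1 ≠ p.2 := by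
    have hnull : ((μ.map X).prod (μ.map Y)) (Set.diagonal α) = 0 := by
      rw [Measure.measure_prod_null measurableSet_diagonal]
      refine .of_forall fun x ↦ ?_
      have : Prod.mk x ⁻¹' Set.diagonal α = {x} := by ext; simp [eq_comm]
      simp [this]
    rw [hmap, ae_iff]
    simpa [Set.diagonal] using hnull
  exact ae_of_ae_map (hX.prodMk hY) hdiag

theorem ae_injective_pi [MeasurableSpace α] [MeasurableEq α] [Fintype ι] (ν : ι → Measure α)
    [∀ i, IsProbabilityMeasure (ν i)] [∀ i, NullSingletonClass (ν i)] :
    ∀ᵐ h ∂Measure.pi ν, Function.Injective h := by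
  have hne (i j : ι) : ∀ᵐ h ∂Measure.pi ν, i ≠ j → h i ≠ h j := by
    by_cases hij : i = j
    · simp [hij]
    have hindep : IndepFun (fun h : ι → α ↦ h i) (fun h ↦ h j) (Measure.pi ν) :=
      (iIndepFun_pi fun i ↦ (measurable_id (α := α)).aemeasurable).indepFun hij
    have : NullSingletonClass ((Measure.pi ν).map fun h ↦ h j) := by
      rw [(measurePreserving_eval ν j).map_eq]
      infer_instance
    filter_upwards [ae_ne_of_indepFun (measurable_pi_apply i).aemeasurable
      (measurable_pi_apply j).aemeasurable hindep] with h hh _ using hh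
  filter_upwards [ae_all_iff.2 fun i ↦ ae_all_iff.2 (hne i)] with h hh i j hij
  by_contra hij'
  exact hh i j hij' hij

-- `hvar` is multiplicative so as to include `c = 0`, where `X` is almost surely constant.
theorem measureReal_lt_abs_sub_integral_le [IsProbabilityMeasure μ] {X : Ω → ℝ} (hX : MemLp X 2 μ)
    {c δ : ℝ} (hc : 0 ≤ c) (hδ : 0 ≤ δ) (hvar : Var[X; μ] ≤ δ * c ^ 2) :
    μ.real {ω | c < |X ω - μ[X]|} ≤ δ := by
  rcases hc.eq_or_lt with rfl | hc
  · have hzero : Var[X; μ] = 0 := le_antisymm (by simpa using hvar) (variance_nonneg X μ)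
    have hnull : μ {ω | 0 < |X ω - μ[X]|} = 0 := by
      refine measure_eq_zero_iff_ae_notMem.2 ?_
      filter_upwards [ae_eq_integral_of_variance_eq_zero hX hzero] with ω hω
      simp [hω]
    rwa [measureReal_def, hnull, ENNReal.toReal_zero]
  · refine ENNReal.toReal_le_of_le_ofReal hδ ?_
    calc μ {ω | c < |X ω - μ[X]|} ≤ μ {ω | c ≤ |X ω - μ[X]|} :=
        measure_mono <| Set.ofPred_subset_ofPred.2 fun _ ↦ le_of_lt
      _ ≤ ENNReal.ofReal (Var[X; μ] / c ^ 2) := meas_ge_le_variance_div_sq hX hc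
      _ ≤ ENNReal.ofReal δ := by
        gcongr
        rwa [div_le_iff₀ (by positivity)]

theorem measureReal_pi_lt_abs_average_sub_integral_le [Fintype ι] [Nonempty ι]
    [IsProbabilityMeasure μ] {X : Ω → ℝ} (hX : MemLp X 2 μ) {c δ : ℝ} (hc : 0 ≤ c) (hδ : 0 ≤ δ)
    (hvar : Var[X; μ] ≤ δ * Fintype.card ι * c ^ 2) :
    (Measure.pi fun _ : ι ↦ μ).real
      {H | c < |(∑ i, X (H i)) / Fintype.card ι - μ[X]|} ≤ δ := by
  set P := Measure.pi fun _ : ι ↦ μ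
  have hcard : (0 : ℝ) < Fintype.card ι := mod_cast Fintype.card_pos
  have hXi (i : ι) : MemLp (fun H : ι → Ω ↦ X (H i)) 2 P :=
    hX.comp_measurePreserving (measurePreserving_eval (fun _ : ι ↦ μ) i)
  have hmean : P[fun H ↦ (∑ i, X (H i)) / Fintype.card ι] = μ[X] := by
    have heval (i : ι) : ∫ H : ι → Ω, X (H i) ∂P = μ[X] :=
      integral_comp_eval (μ := fun _ : ι ↦ μ) (i := i) hX.1
    rw [integral_div, integral_finsetSum _ fun i _ ↦ (hXi i).integrable (by norm_num)]
    simp [heval, hcard.ne']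
  have hsum : Var[fun H ↦ ∑ i, X (H i); P] = Fintype.card ι * Var[X; μ] := by
    have := variance_sum_pi (μ := fun _ : ι ↦ μ) (X := fun _ ↦ X) fun _ ↦ hX
    simpa [Finset.sum_fn] using this
  have hmem : MemLp (fun H ↦ (∑ i, X (H i)) / Fintype.card ι) 2 P := by
    simpa only [div_eq_mul_inv] using (memLp_finsetSum _ fun i _ ↦ hXi i).mul_const _
  rw [← hmean]
  refine measureReal_lt_abs_sub_integral_le hmem hc hδ ?_
  simp only [div_eq_mul_inv, variance_mul_const, hsum]
  calc Fintype.card ι * Var[X; μ] * (Fintype.card ι : ℝ)⁻¹ ^ 2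
      = Var[X; μ] / Fintype.card ι := by field_simp
    _ ≤ δ * c ^ 2 := by rw [div_le_iff₀ hcard]; linarith

theorem one_sub_add_le_measureReal [IsProbabilityMeasure μ] {A B G : Set Ω} {p q : ℝ}
    (hA : μ.real A ≤ p) (hB : μ.real B ≤ q) (h : ∀ ω, ω ∉ A → ω ∉ B → ω ∈ G) :
    1 - (p + q) ≤ μ.real G := by
  have hcover : G ∪ (A ∪ B) = Set.univ := Set.eq_univ_of_forall fun ω ↦ by grind
  have huniv : μ.real (G ∪ (A ∪ B)) = 1 := hcover ▸ probReal_univ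
  linarith [measureReal_union_le (μ := μ) G (A ∪ B), measureReal_union_le (μ := μ) A B]

end Probability

section Argmin

variable {α : Type*} {s t : Finset α} {f : α → ℝ} {a : α}

theorem argminOn_mem (hs : s.Nonempty) (f : α → ℝ) : argminOn s hs f ∈ s :=
  (s.exists_min_image f hs).choose_spec.1

theorem isMinOn_argminOn (hs : s.Nonempty) (f : α → ℝ) : IsMinOn f s (argminOn s hs f) :=
  isMinOn_iff.2 (s.exists_min_image f hs).choose_spec.2

theorem argminOn_eq_of_isMinOn (hs : s.Nonempty) (hf : Function.Injective f) (ha : a ∈ s)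
    (hmin : IsMinOn f s a) : argminOn s hs f = a :=
  hf (le_antisymm (isMinOn_argminOn hs f ha) (hmin (argminOn_mem hs f)))

theorem apply_argminOn (hs : s.Nonempty) (f : α → ℝ) : f (argminOn s hs f) = s.inf' hs f :=
  le_antisymm (le_inf' _ _ fun _ hb ↦ isMinOn_argminOn hs f hb) (inf'_le _ (argminOn_mem hs f))

theorem min_apply_argminOn [DecidableEq α] (hs : s.Nonempty) (ht : t.Nonempty) (f : α → ℝ) :
    min (f (argminOn s hs f)) (f (argminOn t ht f)) =
      (s ∪ t).inf' (hs.mono subset_union_left) f := by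
  rw [apply_argminOn hs f, apply_argminOn ht f, inf'_union hs ht]

theorem measurableSet_isMinOn (s : Finset α) (a : α) :
    MeasurableSet {f : α → ℝ | IsMinOn f s a} := by
  simp only [isMinOn_iff, Set.ofPred_forall]
  exact s.measurableSet_biInter fun b _ ↦
    measurableSet_le (measurable_pi_apply a) (measurable_pi_apply b)

end Argmin

section UniformHash

variable {J : Type*} [Fintype J] {W : Finset J}

instance isProbabilityMeasure_volume_restrict_Icc :
    IsProbabilityMeasure ((volume : Measure ℝ).restrict (Set.Icc 0 1)) :=
  ⟨by simp⟩

instance isProbabilityMeasure_uniformHash : IsProbabilityMeasure (uniformHash J) := by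
  unfold uniformHash
  infer_instance

theorem ae_injective_uniformHash : ∀ᵐ h ∂uniformHash J, Function.Injective h :=
  ae_injective_pi _

theorem ae_mem_Icc_uniformHash : ∀ᵐ h ∂uniformHash J, ∀ j, h j ∈ Set.Icc (0 : ℝ) 1 :=
  ae_all_iff.2 fun _ ↦ Measure.tendsto_eval_ae_ae.eventually (ae_restrict_mem measurableSet_Icc)

theorem measurePreserving_comp_perm_uniformHash (σ : Equiv.Perm J) :
    MeasurePreserving (fun h : J → ℝ ↦ h ∘ σ) (uniformHash J) (uniformHash J) :=
  measurePreserving_arrowCongr' _ _ σ.symm (MeasurableEquiv.refl ℝ) fun _ ↦ MeasurePreserving.id _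

/-! ### The minimal hash value -/

theorem measureReal_le_inf'_uniformHash (hW : W.Nonempty) {t : ℝ} (ht : t ∈ Set.Icc (0 : ℝ) 1) :
    (uniformHash J).real {h | t ≤ W.inf' hW h} = (1 - t) ^ #W := by
  have hbox : {h : J → ℝ | t ≤ W.inf' hW h} = (W : Set J).pi fun _ ↦ Set.Ici t := by
    ext h
    simp [Set.mem_pi]
  have hside : Set.Ici t ∩ Set.Icc 0 1 = Set.Icc t 1 := by
    ext x
    simp only [Set.mem_inter_iff, Set.mem_Ici, Set.mem_Icc]
    grind
  rw [measureReal_def, hbox, uniformHash, Measure.pi_pi_finset, prod_const,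
    Measure.restrict_apply measurableSet_Ici, hside, Real.volume_Icc, ENNReal.toReal_pow,
    ENNReal.toReal_ofReal (sub_nonneg.2 ht.2)]

theorem ae_inf'_mem_Icc_uniformHash (hW : W.Nonempty) :
    ∀ᵐ h ∂uniformHash J, W.inf' hW h ∈ Set.Icc (0 : ℝ) 1 := by
  filter_upwards [ae_mem_Icc_uniformHash] with h hh
  rw [← apply_argminOn hW h]
  exact hh _

theorem memLp_inf'_uniformHash (hW : W.Nonempty) (p : ℝ≥0∞) :
    MemLp (fun h : J → ℝ ↦ W.inf' hW h) p (uniformHash J) := by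
  refine .of_bound (Measurable.aestronglyMeasurable (by fun_prop)) 1 ?_
  filter_upwards [ae_inf'_mem_Icc_uniformHash hW] with h hh
  rw [Real.norm_of_nonneg hh.1]
  exact hh.2

theorem integral_inf'_uniformHash (hW : W.Nonempty) :
    ∫ h, W.inf' hW h ∂uniformHash J = 1 / (#W + 1) := by
  have hrange := ae_inf'_mem_Icc_uniformHash hW
  rw [Integrable.integral_eq_integral_Ioc_meas_le (M := 1)
    ((memLp_inf'_uniformHash hW 1).integrable le_rfl) (hrange.mono fun _ h ↦ h.1)
    (hrange.mono fun _ h ↦ h.2)]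
  calc ∫ t in Set.Ioc (0 : ℝ) 1, (uniformHash J).real {h | t ≤ W.inf' hW h}
      = ∫ t in (0 : ℝ)..1, (1 - t) ^ #W := by
        rw [intervalIntegral.integral_of_le zero_le_one]
        exact setIntegral_congr_fun measurableSet_Ioc fun t ht ↦
          measureReal_le_inf'_uniformHash hW (Set.Ioc_subset_Icc_self ht)
    _ = 1 / (#W + 1) := by
        rw [intervalIntegral.integral_comp_sub_left fun x ↦ x ^ #W]
        simp

theorem integral_one_sub_sqrt_pow (N : ℕ) :
    ∫ t in (0 : ℝ)..1, (1 - √t) ^ N = 2 / ((N + 1) * (N + 2)) := by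
  calc ∫ t in (0 : ℝ)..1, (1 - √t) ^ N = ∫ x in (0 : ℝ)..1, (1 - √(x ^ 2)) ^ N * (2 * x) := by
        have := intervalIntegral.integral_comp_mul_deriv (a := 0) (b := 1) (f := fun x ↦ x ^ 2)
          (f' := fun x ↦ 2 * x) (g := fun t ↦ (1 - √t) ^ N)
          (fun x _ ↦ by simpa using hasDerivAt_pow 2 x) (by fun_prop) (by fun_prop)
        simpa using this.symm
    _ = ∫ x in (0 : ℝ)..1, 2 * ((1 - x) ^ N - (1 - x) ^ (N + 1)) := by
        refine intervalIntegral.integral_congr fun x hx ↦ ?_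
        rw [Set.uIcc_of_le zero_le_one] at hx
        simp only [Real.sqrt_sq hx.1]
        ring
    _ = 2 * (1 / (N + 1) - 1 / (N + 2)) := by
        rw [intervalIntegral.integral_const_mul,
          intervalIntegral.integral_comp_sub_left fun x : ℝ ↦ x ^ N - x ^ (N + 1),
          intervalIntegral.integral_sub (by simp) (by simp)]
        simp only [sub_self, sub_zero, integral_pow, one_pow, zero_pow N.succ_ne_zero,
          zero_pow (N + 1).succ_ne_zero, Nat.cast_add_one]
        ring
    _ = 2 / ((N + 1) * (N + 2)) := by
        field_simp
        ring

theorem integral_inf'_sq_uniformHash (hW : W.Nonempty) :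
    ∫ h, W.inf' hW h ^ 2 ∂uniformHash J = 2 / ((#W + 1) * (#W + 2)) := by
  have hrange := ae_inf'_mem_Icc_uniformHash hW
  rw [Integrable.integral_eq_integral_Ioc_meas_le (M := 1)
    (memLp_inf'_uniformHash hW 2).integrable_sq (.of_forall fun _ ↦ sq_nonneg _)
    (hrange.mono fun _ h ↦ pow_le_one₀ h.1 h.2),
    ← integral_one_sub_sqrt_pow, intervalIntegral.integral_of_le zero_le_one]
  refine setIntegral_congr_fun measurableSet_Ioc fun t ht ↦ ?_
  have hsqrt : √t ∈ Set.Icc (0 : ℝ) 1 := ⟨Real.sqrt_nonneg t, Real.sqrt_le_one.2 ht.2⟩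
  rw [← measureReal_le_inf'_uniformHash hW hsqrt]
  refine measureReal_congr ?_
  filter_upwards [hrange] with h hh
  exact propext (Real.sqrt_le_left hh.1).symm

theorem variance_inf'_uniformHash_le (hW : W.Nonempty) :
    Var[fun h ↦ W.inf' hW h; uniformHash J] ≤ (1 / (#W + 1)) ^ 2 := by
  rw [variance_eq_sub (memLp_inf'_uniformHash hW 2)]
  simp only [Pi.pow_apply, integral_inf'_uniformHash, integral_inf'_sq_uniformHash]
  rw [sub_le_iff_le_add]
  calc (2 : ℝ) / ((#W + 1) * (#W + 2)) ≤ 2 / ((#W + 1) * (#W + 1)) := by gcongr; norm_num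
    _ = (1 / (#W + 1)) ^ 2 + (1 / (#W + 1)) ^ 2 := by field_simp; norm_num

/-! ### The minimizer is uniform -/

theorem measureReal_isMinOn_eq {l l' : J} (hl : l ∈ W) (hl' : l' ∈ W) :
    (uniformHash J).real {h | IsMinOn h W l} = (uniformHash J).real {h | IsMinOn h W l'} := by
  classical
  let σ := Equiv.swap l l'
  have hσ (k : J) (hk : k ∈ W) : σ k ∈ W := by grind
  have hpre : (fun h : J → ℝ ↦ h ∘ σ) ⁻¹' {h | IsMinOn h W l'} = {h | IsMinOn h W l} := by
    ext h
    simp only [Set.mem_preimage, Set.mem_ofPred_eq, isMinOn_iff, Function.comp_apply, σ,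
      Equiv.swap_apply_right]
    exact ⟨fun hmin k hk ↦ by simpa [σ] using hmin (σ k) (hσ k hk),
      fun hmin k hk ↦ hmin (σ k) (hσ k hk)⟩
  rw [← hpre]
  exact (measurePreserving_comp_perm_uniformHash σ).measureReal_preimage
    (measurableSet_isMinOn W l').nullMeasurableSet

theorem measureReal_isMinOn {l : J} (hl : l ∈ W) :
    (uniformHash J).real {h | IsMinOn h W l} = 1 / #W := by
  have hcover : (⋃ k ∈ W, {h : J → ℝ | IsMinOn h W k}) = Set.univ :=
    Set.eq_univ_of_forall fun h ↦ Set.mem_biUnion (argminOn_mem ⟨l, hl⟩ h) (isMinOn_argminOn _ h)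
  have hdisj : (W : Set J).Pairwise
      (Function.onFun (AEDisjoint (uniformHash J)) fun k ↦ {h | IsMinOn h W k}) := by
    intro k hk k' hk' hne
    refine measure_eq_zero_iff_ae_notMem.2 ?_
    filter_upwards [ae_injective_uniformHash] with h hh hmin
    exact hne (hh (le_antisymm (hmin.1 hk') (hmin.2 hk)))
  have hsum := measureReal_biUnion_finset₀ hdisj fun k _ ↦
    (measurableSet_isMinOn W k).nullMeasurableSet
  rw [hcover, probReal_univ, sum_congr rfl fun k hk ↦ measureReal_isMinOn_eq hk hl, sum_const,
    nsmul_eq_mul] at hsum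
  exact eq_one_div_of_mul_eq_one_right hsum.symm

-- Only almost everywhere: `argminOn` need not be measurable where the hash has ties.
theorem comp_argminOn_ae_eq (hW : W.Nonempty) (f : J → ℝ) :
    (fun h ↦ f (argminOn W hW h)) =ᵐ[uniformHash J]
      fun h ↦ ∑ l ∈ W, {h : J → ℝ | IsMinOn h W l}.indicator (fun _ ↦ f l) h := by
  filter_upwards [ae_injective_uniformHash] with h hh
  rw [sum_eq_single_of_mem _ (argminOn_mem hW h), Set.indicator_of_mem]
  · exact isMinOn_argminOn hW h
  · intro l hl hne
    refine Set.indicator_of_notMem (s := {h : J → ℝ | IsMinOn h W l}) (fun hmin ↦ hne ?_) _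
    exact (argminOn_eq_of_isMinOn hW hh hl hmin).symm

theorem memLp_comp_argminOn (hW : W.Nonempty) (f : J → ℝ) (p : ℝ≥0∞) :
    MemLp (fun h ↦ f (argminOn W hW h)) p (uniformHash J) :=
  (memLp_congr_ae (comp_argminOn_ae_eq hW f)).2 <| memLp_finsetSum _ fun l _ ↦
    (memLp_const (f l)).indicator (measurableSet_isMinOn W l)

theorem integral_comp_argminOn (hW : W.Nonempty) (f : J → ℝ) :
    ∫ h, f (argminOn W hW h) ∂uniformHash J = (∑ l ∈ W, f l) / #W := by
  rw [integral_congr_ae (comp_argminOn_ae_eq hW f), integral_finsetSum _ fun l _ ↦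
    (integrable_const (f l)).indicator (measurableSet_isMinOn W l), sum_div]
  refine sum_congr rfl fun l hl ↦ ?_
  rw [integral_indicator_const _ (measurableSet_isMinOn W l), measureReal_isMinOn hl, smul_eq_mul,
    one_div_mul_eq_div]

theorem variance_comp_argminOn_le (hW : W.Nonempty) (f : J → ℝ) :
    Var[fun h ↦ f (argminOn W hW h); uniformHash J] ≤ (∑ l ∈ W, f l ^ 2) / #W :=
  (variance_le_expectation_sq (memLp_comp_argminOn hW f 2).1).trans_eq
    (integral_comp_argminOn hW fun l ↦ f l ^ 2)

end UniformHash

section Vectors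

variable {n : ℕ}

theorem sq_vnormOn (S : Finset (Fin n)) (x : Fin n → ℝ) : vnormOn S x ^ 2 = ∑ i ∈ S, x i ^ 2 :=
  Real.sq_sqrt (sum_nonneg fun _ _ ↦ sq_nonneg _)

theorem vnormOn_nonneg (S : Finset (Fin n)) (x : Fin n → ℝ) : 0 ≤ vnormOn S x :=
  Real.sqrt_nonneg _

theorem vnormOn_le_vnorm (S : Finset (Fin n)) (x : Fin n → ℝ) : vnormOn S x ≤ vnorm x :=
  Real.sqrt_le_sqrt (sum_le_sum_of_subset_of_nonneg S.subset_univ fun _ _ _ ↦ sq_nonneg _)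

theorem vnormOn_div (S : Finset (Fin n)) (x : Fin n → ℝ) {c : ℝ} (hc : 0 ≤ c) :
    vnormOn S (fun i ↦ x i / c) = vnormOn S x / c := by
  simp only [vnormOn, div_pow, ← sum_div]
  rw [Real.sqrt_div' _ (sq_nonneg c), Real.sqrt_sq hc]

theorem vnorm_pos {x : Fin n → ℝ} (hx : x ≠ 0) : 0 < vnorm x := by
  obtain ⟨i, hi⟩ := Function.ne_iff.1 hx
  exact Real.sqrt_pos.2 (sum_pos' (fun _ _ ↦ sq_nonneg _) ⟨i, mem_univ i, sq_pos_of_ne_zero hi⟩)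

theorem vnorm_div_vnorm {x : Fin n → ℝ} (hx : x ≠ 0) : vnorm (fun i ↦ x i / vnorm x) = 1 :=
  (vnormOn_div univ x (vnorm_pos hx).le).trans (div_self (vnorm_pos hx).ne')

theorem supp_div (x : Fin n → ℝ) {c : ℝ} (hc : c ≠ 0) : supp (fun i ↦ x i / c) = supp x := by
  simp [supp, hc]

theorem abs_mul_mul_sub_sum_mul_le (x y : Fin n → ℝ) {A B e p q z : ℝ} (hA : 0 < A) (hB : 0 < B)
    (hz : |z - ∑ i, x i / A * (y i / B)| ≤ e * max (p / A) (q / B)) :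
    |A * B * z - ∑ i, x i * y i| ≤ e * max (p * B) (A * q) := by
  have hsum : ∑ i, x i * y i = A * B * ∑ i, x i / A * (y i / B) := by
    rw [mul_sum]
    exact sum_congr rfl fun i _ ↦ by field_simp
  calc |A * B * z - ∑ i, x i * y i| = A * B * |z - ∑ i, x i / A * (y i / B)| := by
        rw [hsum, ← mul_sub, abs_mul, abs_of_pos (mul_pos hA hB)]
    _ ≤ A * B * (e * max (p / A) (q / B)) := by gcongr
    _ = e * max (p * B) (A * q) := by
        rw [mul_left_comm, mul_max_of_nonneg _ _ (by positivity)]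
        congr 2 <;> field_simp

theorem sum_sq_of_vnorm_eq_one {x : Fin n → ℝ} (hx : vnorm x = 1) : ∑ i, x i ^ 2 = 1 :=
  Real.sqrt_eq_one.1 hx

theorem sq_le_one_of_vnorm_eq_one {x : Fin n → ℝ} (hx : vnorm x = 1) (i : Fin n) : x i ^ 2 ≤ 1 :=
  sum_sq_of_vnorm_eq_one hx ▸ single_le_sum (fun j _ ↦ sq_nonneg (x j)) (mem_univ i)

theorem abs_sum_mul_le_vnormOn_mul_vnormOn (x y : Fin n → ℝ) :
    |∑ i, x i * y i| ≤ vnormOn (supp x ∩ supp y) x * vnormOn (supp x ∩ supp y) y := by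
  have hsupp : ∑ i, x i * y i = ∑ i ∈ supp x ∩ supp y, x i * y i := by
    refine (sum_subset (subset_univ _) fun i _ hi ↦ ?_).symm
    simpa [supp, or_iff_not_imp_left] using hi
  rw [hsupp]
  refine abs_le_of_sq_le_sq ?_ (mul_nonneg (vnormOn_nonneg _ _) (vnormOn_nonneg _ _))
  rw [mul_pow, sq_vnormOn, sq_vnormOn]
  exact sum_mul_sq_le_sq_mul_sq _ x y

end Vectors

section ExpandedSupport

variable {n L : ℕ} {u v : Fin n → ℝ}

/-- The squared entries of `u` are integer multiples of `1 / L`, so that each block of the expanded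
support represents `u i ^ 2` exactly. -/
def HasDiscreteSquares (L : ℕ) (u : Fin n → ℝ) : Prop :=
  ∀ i, ∃ k : ℤ, u i ^ 2 = k / L

theorem HasDiscreteSquares.min_abs (hu : HasDiscreteSquares L u) (hv : HasDiscreteSquares L v) :
    HasDiscreteSquares L fun i ↦ min |u i| |v i| := fun i ↦ by
  rcases min_choice |u i| |v i| with h | h
  · simpa [h] using hu i
  · simpa [h] using hv i

theorem HasDiscreteSquares.exists_nat (hu : HasDiscreteSquares L u) {i : Fin n}
    (hi : u i ^ 2 ≤ 1) : ∃ k ≤ L, u i ^ 2 * L = k := by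
  rcases L.eq_zero_or_pos with rfl | hL
  · exact ⟨0, le_rfl, by simp⟩
  obtain ⟨k, hk⟩ := hu i
  have hkL : u i ^ 2 * L = k := by rw [hk]; field_simp
  have hk₀ : 0 ≤ k := by
    have : (0 : ℝ) ≤ k := hkL ▸ by positivity
    exact_mod_cast this
  lift k to ℕ using hk₀
  refine ⟨k, ?_, mod_cast hkL⟩
  have : (k : ℝ) ≤ L := by
    rw [← Int.cast_natCast, ← hkL]
    exact mul_le_of_le_one_left (Nat.cast_nonneg L) hi
  exact_mod_cast this

theorem min_abs_sq (x y : ℝ) : min |x| |y| ^ 2 = min (x ^ 2) (y ^ 2) := by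
  rcases le_total |x| |y| with h | h
  · rw [min_eq_left h, sq_abs, min_eq_left (sq_le_sq.2 h)]
  · rw [min_eq_right h, sq_abs, min_eq_right (sq_le_sq.2 h)]

theorem expandedSupport_inter (L : ℕ) (u v : Fin n → ℝ) :
    expandedSupport L u ∩ expandedSupport L v = expandedSupport L fun i ↦ min |u i| |v i| := by
  ext p
  simp only [expandedSupport, mem_inter, mem_filter, mem_univ, true_and, min_abs_sq,
    min_mul_of_nonneg _ _ (Nat.cast_nonneg (α := ℝ) L), le_min_iff]

theorem sum_expandedSupport (hu : HasDiscreteSquares L u) (hu₁ : ∀ i, u i ^ 2 ≤ 1)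
    (g : Fin n → ℝ) : ∑ p ∈ expandedSupport L u, g p.1 = L * ∑ i, u i ^ 2 * g i := by
  rw [expandedSupport, sum_filter, Fintype.sum_prod_type, mul_sum]
  refine sum_congr rfl fun i _ ↦ ?_
  obtain ⟨k, hkL, hk⟩ := hu.exists_nat (hu₁ i)
  have hblock : #{j : Fin L | ((j : ℕ) + 1 : ℝ) ≤ k} = k := by
    have hlt (j : Fin L) : ((j : ℕ) + 1 : ℝ) ≤ k ↔ (j : ℕ) < k := by norm_cast
    simp only [hlt, Fin.card_filter_val_lt, min_eq_right hkL]
  simp only [hk]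
  rw [← sum_filter, sum_const, hblock, nsmul_eq_mul, ← hk]
  ring

theorem card_expandedSupport (hu : HasDiscreteSquares L u) (hu₁ : vnorm u = 1) :
    #(expandedSupport L u) = L := by
  have := sum_expandedSupport hu (sq_le_one_of_vnorm_eq_one hu₁) fun _ ↦ 1
  simp only [sum_const, nsmul_eq_mul, mul_one, sum_sq_of_vnorm_eq_one hu₁] at this
  exact_mod_cast this

theorem le_card_expandedSupport_union (hu : HasDiscreteSquares L u) (hu₁ : vnorm u = 1) :
    L ≤ #(expandedSupport L u ∪ expandedSupport L v) :=
  (card_expandedSupport hu hu₁).symm.trans_le (card_le_card subset_union_left)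

theorem card_expandedSupport_union_le (hu : HasDiscreteSquares L u) (hv : HasDiscreteSquares L v)
    (hu₁ : vnorm u = 1) (hv₁ : vnorm v = 1) :
    #(expandedSupport L u ∪ expandedSupport L v) ≤ 2 * L := by
  refine (card_union_le _ _).trans_eq ?_
  rw [card_expandedSupport hu hu₁, card_expandedSupport hv hv₁, two_mul]

theorem sum_expandedSupport_inter (hu : HasDiscreteSquares L u) (hv : HasDiscreteSquares L v)
    (hu₁ : ∀ i, u i ^ 2 ≤ 1) (g : Fin n → ℝ) :
    ∑ p ∈ expandedSupport L u ∩ expandedSupport L v, g p.1 =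
      L * ∑ i, min (u i ^ 2) (v i ^ 2) * g i := by
  have hmin (i : Fin n) : min |u i| |v i| ^ 2 ≤ 1 := by
    rw [min_abs_sq]
    exact (min_le_left _ _).trans (hu₁ i)
  simpa only [min_abs_sq, expandedSupport_inter] using sum_expandedSupport (hu.min_abs hv) hmin g

end ExpandedSupport

section CollisionWeight

/-- The value `x y / min(x², y²)` that weighted MinHash reports for a hash collision in a block
where the two vectors have entries `x` and `y`. -/
noncomputable def collisionWeight (x y : ℝ) : ℝ :=
  x * y / min (x ^ 2) (y ^ 2)

theorem min_sq_pos {x y : ℝ} (hxy : x * y ≠ 0) : 0 < min (x ^ 2) (y ^ 2) :=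
  lt_min (sq_pos_of_ne_zero (left_ne_zero_of_mul hxy))
    (sq_pos_of_ne_zero (right_ne_zero_of_mul hxy))

theorem min_mul_collisionWeight (x y : ℝ) :
    min (x ^ 2) (y ^ 2) * collisionWeight x y = x * y := by
  by_cases hxy : x * y = 0
  · simp [collisionWeight, hxy]
  · exact mul_div_cancel₀ _ (min_sq_pos hxy).ne'

theorem min_mul_collisionWeight_sq {x y : ℝ} (hxy : x * y ≠ 0) :
    min (x ^ 2) (y ^ 2) * collisionWeight x y ^ 2 = max (x ^ 2) (y ^ 2) := by
  have hmin := min_sq_pos hxy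
  rw [collisionWeight]
  field_simp
  rw [min_mul_max]

variable {n : ℕ}

theorem sum_min_mul_collisionWeight_sq_le (u v : Fin n → ℝ) :
    ∑ i, min (u i ^ 2) (v i ^ 2) * collisionWeight (u i) (v i) ^ 2 ≤
      vnormOn (supp u ∩ supp v) u ^ 2 + vnormOn (supp u ∩ supp v) v ^ 2 := by
  rw [sq_vnormOn, sq_vnormOn, ← sum_add_distrib]
  calc ∑ i, min (u i ^ 2) (v i ^ 2) * collisionWeight (u i) (v i) ^ 2
      = ∑ i ∈ supp u ∩ supp v, min (u i ^ 2) (v i ^ 2) * collisionWeight (u i) (v i) ^ 2 := by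
        refine (sum_subset (subset_univ _) fun i _ hi ↦ ?_).symm
        have : u i * v i = 0 := by simpa [supp, or_iff_not_imp_left] using hi
        simp [collisionWeight, this]
    _ ≤ ∑ i ∈ supp u ∩ supp v, (u i ^ 2 + v i ^ 2) := by
        refine sum_le_sum fun i hi ↦ ?_
        have : u i * v i ≠ 0 := by simpa [supp] using hi
        rw [min_mul_collisionWeight_sq this]
        exact max_le_add_of_nonneg (sq_nonneg _) (sq_nonneg _)

end CollisionWeight

section MinHash

variable {n L : ℕ} {u v : Fin n → ℝ}

/-- The value of the weighted MinHash variable as a function of the minimizer of the hash over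
`Ū ∪ V̄`: the collision weight of its block if it lies in `Ū ∩ V̄`, and `0` otherwise. -/
noncomputable def collisionValue (u v : Fin n → ℝ) : Fin n × Fin L → ℝ :=
  (↑(expandedSupport L u ∩ expandedSupport L v) : Set (Fin n × Fin L)).indicator
    fun p ↦ collisionWeight (u p.1) (v p.1)

theorem Zw_eq_collisionValue_argminOn (hU : (expandedSupport L u).Nonempty)
    (hV : (expandedSupport L v).Nonempty)
    (hUV : (expandedSupport L u ∪ expandedSupport L v).Nonempty)
    {h : Fin n × Fin L → ℝ} (hh : Function.Injective h) :
    Zw u v hU hV h = collisionValue u v (argminOn _ hUV h) := by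
  have hmin := isMinOn_argminOn hUV h
  by_cases hr : argminOn _ hUV h ∈ expandedSupport L u ∩ expandedSupport L v
  · have hrU := argminOn_eq_of_isMinOn hU hh (mem_inter.1 hr).1
      (hmin.on_subset (coe_subset.2 subset_union_left))
    have hrV := argminOn_eq_of_isMinOn hV hh (mem_inter.1 hr).2
      (hmin.on_subset (coe_subset.2 subset_union_right))
    rw [collisionValue, Set.indicator_of_mem (mem_coe.2 hr), Zw, hrU, hrV, if_pos rfl, one_mul,
      collisionWeight]
  · have hne : h (argminOn _ hU h) ≠ h (argminOn _ hV h) := by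
      intro heq
      have heq' : argminOn _ hU h = argminOn _ hUV h := by
        apply hh
        rw [apply_argminOn hUV h, ← min_apply_argminOn hU hV h, ← heq, min_self]
      rw [← heq', mem_inter] at hr
      exact hr ⟨argminOn_mem hU h, hh heq ▸ argminOn_mem hV h⟩
    rw [collisionValue, Set.indicator_of_notMem (mt mem_coe.1 hr), Zw, if_neg hne, zero_mul]

theorem sum_collisionValue (hu : HasDiscreteSquares L u) (hv : HasDiscreteSquares L v)
    (hu₁ : ∀ i, u i ^ 2 ≤ 1) :
    ∑ p ∈ expandedSupport L u ∪ expandedSupport L v, collisionValue u v p =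
      L * ∑ i, u i * v i := by
  simp only [collisionValue, sum_indicator_subset _ inter_subset_union]
  rw [sum_expandedSupport_inter hu hv hu₁ fun i ↦ collisionWeight (u i) (v i)]
  simp only [min_mul_collisionWeight]

theorem sum_collisionValue_sq_le (hu : HasDiscreteSquares L u) (hv : HasDiscreteSquares L v)
    (hu₁ : ∀ i, u i ^ 2 ≤ 1) :
    ∑ p ∈ expandedSupport L u ∪ expandedSupport L v, collisionValue u v p ^ 2 ≤
      L * (vnormOn (supp u ∩ supp v) u ^ 2 + vnormOn (supp u ∩ supp v) v ^ 2) := by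
  rw [collisionValue, sum_indicator_subset_of_eq_zero _ (fun _ c ↦ c ^ 2) inter_subset_union
    (by simp), sum_expandedSupport_inter hu hv hu₁ fun i ↦ collisionWeight (u i) (v i) ^ 2]
  gcongr
  exact sum_min_mul_collisionWeight_sq_le u v

variable (hU : (expandedSupport L u).Nonempty) (hV : (expandedSupport L v).Nonempty)

theorem Zw_ae_eq (hUV : (expandedSupport L u ∪ expandedSupport L v).Nonempty) :
    Zw u v hU hV =ᵐ[uniformHash (Fin n × Fin L)]
      fun h ↦ collisionValue u v (argminOn _ hUV h) :=
  ae_injective_uniformHash.mono fun _ ↦ Zw_eq_collisionValue_argminOn hU hV hUV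

theorem memLp_Zw (p : ℝ≥0∞) : MemLp (Zw u v hU hV) p (uniformHash (Fin n × Fin L)) :=
  (memLp_congr_ae (Zw_ae_eq hU hV (hU.mono subset_union_left))).2 (memLp_comp_argminOn _ _ p)

theorem integral_Zw (hu : HasDiscreteSquares L u) (hv : HasDiscreteSquares L v)
    (hu₁ : ∀ i, u i ^ 2 ≤ 1) :
    ∫ h, Zw u v hU hV h ∂uniformHash (Fin n × Fin L) =
      L * (∑ i, u i * v i) / #(expandedSupport L u ∪ expandedSupport L v) := by
  rw [integral_congr_ae (Zw_ae_eq hU hV (hU.mono subset_union_left)), integral_comp_argminOn,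
    sum_collisionValue hu hv hu₁]

theorem variance_Zw_le (hu : HasDiscreteSquares L u) (hv : HasDiscreteSquares L v)
    (hu₁ : vnorm u = 1) :
    Var[Zw u v hU hV; uniformHash (Fin n × Fin L)] ≤
      vnormOn (supp u ∩ supp v) u ^ 2 + vnormOn (supp u ∩ supp v) v ^ 2 := by
  have hUV := hU.mono (subset_union_left (s₂ := expandedSupport L v))
  rw [variance_congr (Zw_ae_eq hU hV hUV)]
  refine (variance_comp_argminOn_le hUV _).trans ?_
  rw [div_le_iff₀ (by exact_mod_cast hUV.card_pos), mul_comm]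
  refine (sum_collisionValue_sq_le hu hv (sq_le_one_of_vnorm_eq_one hu₁)).trans ?_
  gcongr
  exact le_card_expandedSupport_union hu hu₁

end MinHash

section Estimate

theorem abs_inv_sub_le {q s t : ℝ} (hq : 0 < q) (hs : s ≤ 1 / 2) (ht : |t - 1 / q| ≤ s / q) :
    |1 / t - q| ≤ 2 * s * q := by
  have hlow : 1 / (2 * q) ≤ t := by
    calc 1 / (2 * q) = 1 / q - 1 / 2 / q := by field_simp; norm_num
      _ ≤ 1 / q - s / q := by gcongr
      _ ≤ t := by linarith [(abs_le.1 ht).1]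
  have ht₀ : 0 < t := lt_of_lt_of_le (by positivity) hlow
  calc |1 / t - q| = q / t * |t - 1 / q| := by
        have : 1 / t - q = -(q / t * (t - 1 / q)) := by field_simp; ring
        rw [this, abs_neg, abs_mul, abs_of_pos (by positivity)]
    _ ≤ q / (1 / (2 * q)) * (s / q) := by gcongr
    _ = 2 * s * q := by field_simp

theorem abs_unionEstimate_mul_sub_le {L N d s S t z : ℝ} (hL : 1 ≤ L) (hLN : L ≤ N)
    (hNL : N ≤ 2 * L) (hs : s ≤ 1 / 2) (ht : |t - 1 / (N + 1)| ≤ s / (N + 1)) (hd : |d| ≤ S)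
    (hz : |z - L * d / N| ≤ s * S) : |1 / L * (1 / t - 1) * z - d| ≤ 14 * s * S := by
  have hN : 0 < N := by linarith
  have hs₀ : 0 ≤ s := by
    have := (abs_nonneg _).trans ht
    rwa [le_div_iff₀ (by linarith), zero_mul] at this
  have hS : 0 ≤ S := (abs_nonneg d).trans hd
  have hunion : |1 / L * (1 / t - 1) - N / L| ≤ 6 * s := by
    calc |1 / L * (1 / t - 1) - N / L| = |1 / t - (N + 1)| / L := by
          have : 1 / L * (1 / t - 1) - N / L = (1 / t - (N + 1)) / L := by ring
          rw [this, abs_div, abs_of_pos (show 0 < L by linarith)]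
      _ ≤ 2 * s * (3 * L) / L := by
          gcongr
          exact (abs_inv_sub_le (by linarith) hs ht).trans (by gcongr; linarith)
      _ = 6 * s := by field_simp; ring
  have hz₂ : |z| ≤ 2 * S := by
    calc |z| ≤ |L * d / N| + |z - L * d / N| := by
          simpa using abs_add_le (L * d / N) (z - L * d / N)
      _ ≤ S + 1 * S := by
          gcongr
          · rw [mul_div_right_comm, abs_mul, abs_of_pos (by positivity)]
            exact (mul_le_of_le_one_left (abs_nonneg d) ((div_le_one hN).2 hLN)).trans hd
          · exact hz.trans (by gcongr; linarith)
      _ = 2 * S := by ring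
  calc |1 / L * (1 / t - 1) * z - d|
      = |N / L * (z - L * d / N) + (1 / L * (1 / t - 1) - N / L) * z| := by
        congr 1
        field_simp
        ring
    _ ≤ N / L * |z - L * d / N| + |1 / L * (1 / t - 1) - N / L| * |z| := by
        refine (abs_add_le _ _).trans_eq ?_
        rw [abs_mul, abs_mul, abs_of_pos (show 0 < N / L by positivity)]
    _ ≤ 2 * (s * S) + 6 * s * (2 * S) := by
        gcongr
        rwa [div_le_iff₀ (by linarith)]
    _ = 14 * s * S := by ring

end Estimate

section Concentration

variable {m : ℕ} {s δ : ℝ}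

instance isProbabilityMeasure_hashFamilies {J : Type*} [Fintype J] :
    IsProbabilityMeasure (hashFamilies m J) := by
  unfold hashFamilies
  infer_instance

theorem measureReal_lt_abs_average_inf'_sub_le {J : Type*} [Fintype J] {W : Finset J}
    (hW : W.Nonempty) (hs : 0 ≤ s) (hδ : 0 ≤ δ) (hm : 1 ≤ δ * m * s ^ 2) :
    (hashFamilies m J).real
      {H | s / (#W + 1) < |(∑ i, W.inf' hW (H i)) / m - 1 / (#W + 1)|} ≤ δ := by
  have : NeZero m := ⟨by rintro rfl; norm_num at hm⟩
  have hvar : Var[fun h ↦ W.inf' hW h; uniformHash J] ≤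
      δ * Fintype.card (Fin m) * (s / (#W + 1)) ^ 2 := by
    refine (variance_inf'_uniformHash_le hW).trans ?_
    rw [Fintype.card_fin, div_pow, div_pow, one_pow, ← mul_div_assoc]
    gcongr
  simpa only [hashFamilies, integral_inf'_uniformHash hW, Fintype.card_fin] using
    measureReal_pi_lt_abs_average_sub_integral_le (ι := Fin m) (memLp_inf'_uniformHash hW 2)
      (by positivity) hδ hvar

variable {n L : ℕ} {u v : Fin n → ℝ} (hU : (expandedSupport L u).Nonempty)
  (hV : (expandedSupport L v).Nonempty)

theorem measureReal_lt_abs_average_Zw_sub_le (hu : HasDiscreteSquares L u)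
    (hv : HasDiscreteSquares L v) (hu₁ : vnorm u = 1) (hs : 0 ≤ s) (hδ : 0 ≤ δ)
    (hm : 2 ≤ δ * m * s ^ 2) {S : ℝ} (huS : vnormOn (supp u ∩ supp v) u ≤ S)
    (hvS : vnormOn (supp u ∩ supp v) v ≤ S) :
    (hashFamilies m (Fin n × Fin L)).real
      {H | s * S < |(∑ i, Zw u v hU hV (H i)) / m -
        L * (∑ i, u i * v i) / #(expandedSupport L u ∪ expandedSupport L v)|} ≤ δ := by
  have : NeZero m := ⟨by rintro rfl; norm_num at hm⟩
  have hS : 0 ≤ S := (vnormOn_nonneg _ _).trans huS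
  have hvar : Var[Zw u v hU hV; uniformHash (Fin n × Fin L)] ≤
      δ * Fintype.card (Fin m) * (s * S) ^ 2 := by
    rw [Fintype.card_fin]
    calc Var[Zw u v hU hV; uniformHash (Fin n × Fin L)]
        ≤ vnormOn (supp u ∩ supp v) u ^ 2 + vnormOn (supp u ∩ supp v) v ^ 2 :=
          variance_Zw_le hU hV hu hv hu₁
      _ ≤ S ^ 2 + S ^ 2 := by gcongr <;> exact vnormOn_nonneg _ _
      _ = 2 * S ^ 2 := by ring
      _ ≤ δ * m * s ^ 2 * S ^ 2 := by gcongr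
      _ = δ * m * (s * S) ^ 2 := by ring
  simpa only [hashFamilies, integral_Zw hU hV hu hv (sq_le_one_of_vnorm_eq_one hu₁),
    Fintype.card_fin] using
    measureReal_pi_lt_abs_average_sub_integral_le (ι := Fin m) (memLp_Zw hU hV 2)
      (by positivity) hδ hvar

/-- The weighted MinHash estimate `(M̃ / m) ∑ᵢ Zᵢ` of the inner product of two unit vectors; the
factor `M̃ = (1 / L) (m / ∑ᵢ min - 1)` estimates `|Ū ∪ V̄| / L`. -/
noncomputable def minHashEstimate (H : Fin m → Fin n × Fin L → ℝ) : ℝ :=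
  1 / (L : ℝ) * (m / (∑ i, min (H i (argminOn (expandedSupport L u) hU (H i)))
    (H i (argminOn (expandedSupport L v) hV (H i)))) - 1) / m * ∑ i, Zw u v hU hV (H i)

theorem abs_minHashEstimate_sub_le (hL : 0 < L) (hu : HasDiscreteSquares L u)
    (hv : HasDiscreteSquares L v) (hu₁ : vnorm u = 1) (hv₁ : vnorm v = 1) (hs : s ≤ 1 / 2) {S : ℝ}
    (hS : |∑ i, u i * v i| ≤ S) {H : Fin m → Fin n × Fin L → ℝ}
    (hmin : |(∑ i, (expandedSupport L u ∪ expandedSupport L v).inf' (hU.mono subset_union_left)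
        (H i)) / m - 1 / (#(expandedSupport L u ∪ expandedSupport L v) + 1)| ≤
      s / (#(expandedSupport L u ∪ expandedSupport L v) + 1))
    (hZ : |(∑ i, Zw u v hU hV (H i)) / m -
        L * (∑ i, u i * v i) / #(expandedSupport L u ∪ expandedSupport L v)| ≤ s * S) :
    |minHashEstimate hU hV H - ∑ i, u i * v i| ≤ 14 * s * S := by
  have := abs_unionEstimate_mul_sub_le (mod_cast hL)
    (mod_cast le_card_expandedSupport_union hu hu₁)
    (mod_cast card_expandedSupport_union_le hu hv hu₁ hv₁) hs hmin hS hZ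
  convert this using 3
  simp only [minHashEstimate, min_apply_argminOn hU hV, one_div_div]
  ring

-- The constant is `1764 = 9 * 14 ^ 2`: tolerance `ε / 14`, with failure probabilities `1 / 9` for
-- the minima and `2 / 9` for the collisions.
theorem two_thirds_le_measureReal_abs_minHashEstimate_sub_le (hL : 0 < L)
    (hu : HasDiscreteSquares L u) (hv : HasDiscreteSquares L v) (hu₁ : vnorm u = 1)
    (hv₁ : vnorm v = 1) {ε : ℝ} (hε : 0 < ε) (hε₁ : ε ≤ 1) (hm : 1764 / ε ^ 2 ≤ m) :
    2 / 3 ≤ (hashFamilies m (Fin n × Fin L)).real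
      {H | |minHashEstimate hU hV H - ∑ i, u i * v i| ≤
        ε * max (vnormOn (supp u ∩ supp v) u) (vnormOn (supp u ∩ supp v) v)} := by
  set S := max (vnormOn (supp u ∩ supp v) u) (vnormOn (supp u ∩ supp v) v)
  have hm' : 9 ≤ m * (ε / 14) ^ 2 := by
    rw [div_le_iff₀ (by positivity)] at hm
    linarith
  have huS : vnormOn (supp u ∩ supp v) u ≤ S := le_max_left _ _
  have hvS : vnormOn (supp u ∩ supp v) v ≤ S := le_max_right _ _
  have hS : |∑ i, u i * v i| ≤ S := (abs_sum_mul_le_vnormOn_mul_vnormOn u v).trans <|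
    (mul_le_of_le_one_right (vnormOn_nonneg _ _) (hv₁ ▸ vnormOn_le_vnorm _ v)).trans huS
  have hmin := measureReal_lt_abs_average_inf'_sub_le (m := m) (s := ε / 14) (δ := 1 / 9)
    (hU.mono (subset_union_left (s₂ := expandedSupport L v))) (by positivity) (by norm_num)
    (by linarith)
  have hZ := measureReal_lt_abs_average_Zw_sub_le (m := m) (s := ε / 14) (δ := 2 / 9) hU hV hu hv
    hu₁ (by positivity) (by norm_num) (by linarith) huS hvS
  calc (2 : ℝ) / 3 = 1 - (1 / 9 + 2 / 9) := by norm_num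
    _ ≤ _ := one_sub_add_le_measureReal hmin hZ fun H hHmin hHZ ↦ ?_
  have := abs_minHashEstimate_sub_le hU hV hL hu hv hu₁ hv₁ (by linarith) hS (not_lt.1 hHmin)
    (not_lt.1 hHZ)
  rwa [mul_div_cancel₀ ε (by norm_num)] at this

end Concentration

/-- Weighted MinHash inner product estimation for discrete vectors: there is an absolute
constant `C > 0` such that for nonzero `a, b ∈ ℝⁿ` whose normalized squared entries are
integer multiples of `1/L`, `ε ∈ (0,1)`, an integer `m ≥ C/ε²`, and `m` mutually
independent uniform hash families on `{1,...,n} × {1,...,L}`, the estimate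
`F = ‖a‖ ‖b‖ (M̃/m) ∑ᵢ Zᵢ` with `M̃ = (1/L)(m / ∑ᵢ min(hⁱ(ℓ_Uⁱ), hⁱ(ℓ_Vⁱ)) - 1)`
satisfies `|F - ⟨a,b⟩| ≤ ε max(‖a_I‖ ‖b‖, ‖a‖ ‖b_I‖)` with probability at least `2/3`,
where `I = supp a ∩ supp b`. -/
theorem weighted_minhash_estimator_discrete :
    ∃ C : ℝ, 0 < C ∧
      ∀ (n L : ℕ), 0 < L →
      ∀ (a b : Fin n → ℝ), a ≠ 0 → b ≠ 0 →
      ∀ u v : Fin n → ℝ,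
        u = (fun i => a i / vnorm a) → v = (fun i => b i / vnorm b) →
      (∀ i, ∃ k : ℤ, (u i) ^ 2 = (k : ℝ) / L) →
      (∀ i, ∃ k : ℤ, (v i) ^ 2 = (k : ℝ) / L) →
      ∀ (hU : (expandedSupport L u).Nonempty) (hV : (expandedSupport L v).Nonempty),
      ∀ ε : ℝ, ε ∈ Set.Ioo (0 : ℝ) 1 →
      ∀ m : ℕ, C / ε ^ 2 ≤ (m : ℝ) →
        (2 : ℝ≥0∞) / 3 ≤
          hashFamilies m (Fin n × Fin L)
            {H : Fin m → Fin n × Fin L → ℝ |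
              |vnorm a * vnorm b *
                  (((1 / (L : ℝ)) *
                      ((m : ℝ) / (∑ i, min (H i (argminOn (expandedSupport L u) hU (H i)))
                          (H i (argminOn (expandedSupport L v) hV (H i)))) - 1)) / m) *
                  (∑ i, Zw u v hU hV (H i)) - ∑ k, a k * b k|
                ≤ ε * max (vnormOn (supp a ∩ supp b) a * vnorm b)
                    (vnorm a * vnormOn (supp a ∩ supp b) b)} := by
  refine ⟨1764, by norm_num, ?_⟩
  rintro n L hL a b ha hb u v rfl rfl hu hv hU hV ε ⟨hε, hε₁⟩ m hm
  have hA := vnorm_pos ha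
  have hB := vnorm_pos hb
  have hunit := two_thirds_le_measureReal_abs_minHashEstimate_sub_le hU hV hL hu hv
    (vnorm_div_vnorm ha) (vnorm_div_vnorm hb) hε hε₁.le hm
  simp only [supp_div _ hA.ne', supp_div _ hB.ne', vnormOn_div _ _ hA.le,
    vnormOn_div _ _ hB.le] at hunit
  calc (2 : ℝ≥0∞) / 3 = ENNReal.ofReal (2 / 3) := by
        rw [ENNReal.ofReal_div_of_pos (by norm_num), ENNReal.ofReal_ofNat, ENNReal.ofReal_ofNat]
    _ ≤ _ := ENNReal.ofReal_le_of_le_toReal hunit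
    _ ≤ _ := measure_mono <| Set.ofPred_subset_ofPred.2 fun H hH ↦ ?_
  rw [mul_assoc (vnorm a * vnorm b)]
  exact abs_mul_mul_sub_sum_mul_le a b hA hB hH
end

section
/- Let z ∈ ℝⁿ be a nonzero unit vector and let L be a positive integer. Then Round(z,L) is a unit vector, every squared entry of Round(z,L) is an integer multiple of 1/L, and every index i with z[i] = 0 satisfies Round(z,L)[i] = 0. -/
open Finset

/-- An index `i*` maximizing `|z i|`. -/
noncomputable def maxIndex {n : ℕ} [NeZero n] (z : Fin n → ℝ) : Fin n :=
  (Finset.exists_max_image Finset.univ (fun i => |z i|)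
    (Finset.univ_nonempty_iff.mpr ⟨⟨0, Nat.pos_of_ne_zero (NeZero.ne n)⟩⟩)).choose

/-- `Round(z, L)`: first set `z̃ i = sign(z i) ⬝ √(⌊z i ^ 2 ⬝ L⌋ / L)` for every `i`; then,
letting `i*` be an index maximizing `|z i|` and `δ = 1 - ∑ i, z̃ i ^ 2`, replace `z̃ i*` by
`sign(z i*) ⬝ √(z̃ i* ^ 2 + δ)`. -/
noncomputable def roundVec {n : ℕ} (z : Fin n → ℝ) (L : ℕ) : Fin n → ℝ :=
  if hn : n = 0 then z
  else
    haveI : NeZero n := ⟨hn⟩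
    let zt : Fin n → ℝ := fun i => Real.sign (z i) * Real.sqrt ((⌊(z i) ^ 2 * L⌋ : ℝ) / L)
    let istar : Fin n := maxIndex z
    fun i => if i = istar then
        Real.sign (z istar) * Real.sqrt ((zt istar) ^ 2 + (1 - ∑ j, (zt j) ^ 2))
      else zt i

/-!
Rounding down replaces each squared entry by a multiple of `1 / L` that is no larger, so the
missing mass `1 - ∑ i, z̃ i ^ 2` is nonnegative and itself a multiple of `1 / L`. All of it is put
back on an entry of maximal modulus, whose sign is `±1` because `z ≠ 0`.
-/

theorem sign_mul_sqrt_sq {x y : ℝ} (hx : x ≠ 0) (hy : 0 ≤ y) :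
    (Real.sign x * √y) ^ 2 = y := by
  obtain hs | hs := Real.sign_apply_eq_of_ne_zero x hx <;> simp [hs, Real.sq_sqrt hy]

theorem abs_apply_le_abs_apply_maxIndex {n : ℕ} [NeZero n] (z : Fin n → ℝ) (i : Fin n) :
    |z i| ≤ |z (maxIndex z)| :=
  (exists_max_image univ (fun i => |z i|) univ_nonempty).choose_spec.2 i (mem_univ i)

theorem apply_maxIndex_ne_zero {n : ℕ} [NeZero n] {z : Fin n → ℝ} (hz : z ≠ 0) :
    z (maxIndex z) ≠ 0 := by
  obtain ⟨i, hi⟩ := Function.ne_iff.mp hz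
  exact abs_pos.mp ((abs_pos.mpr hi).trans_le (abs_apply_le_abs_apply_maxIndex z i))

section RoundDown

variable {ι : Type*} (z : ι → ℝ) (L : ℕ)

/-- The vector `z̃` of the first step of `Round(z, L)`: every squared entry is rounded down to a
multiple of `1 / L`, and signs are kept. -/
noncomputable def roundDown (i : ι) : ℝ :=
  Real.sign (z i) * √((⌊z i ^ 2 * L⌋ : ℝ) / L)

variable {z} in
theorem roundDown_eq_zero {i : ι} (hi : z i = 0) : roundDown z L i = 0 := by
  simp [roundDown, hi]

theorem roundDown_sq (i : ι) : roundDown z L i ^ 2 = (⌊z i ^ 2 * L⌋ : ℝ) / L := by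
  by_cases hi : z i = 0
  · simp [roundDown_eq_zero, hi]
  · have hfloor : (0 : ℝ) ≤ ⌊z i ^ 2 * L⌋ := by
      exact_mod_cast Int.floor_nonneg.mpr (by positivity)
    exact sign_mul_sqrt_sq hi (div_nonneg hfloor L.cast_nonneg)

theorem roundDown_sq_le (i : ι) : roundDown z L i ^ 2 ≤ z i ^ 2 := by
  rw [roundDown_sq]
  exact div_le_of_le_mul₀ L.cast_nonneg (sq_nonneg _) (Int.floor_le _)

end RoundDown

section RoundVec

variable {n : ℕ} {z : Fin n → ℝ} (L : ℕ)

theorem roundVec_eq_update [NeZero n] (z : Fin n → ℝ) :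
    roundVec z L = Function.update (roundDown z L) (maxIndex z)
      (Real.sign (z (maxIndex z)) *
        √(roundDown z L (maxIndex z) ^ 2 + (1 - ∑ j, roundDown z L j ^ 2))) := by
  ext i
  simp only [roundVec, dif_neg (NeZero.ne n), Function.update_apply, roundDown]

theorem roundVec_eq_zero {i : Fin n} (hi : z i = 0) : roundVec z L i = 0 := by
  have := i.neZero
  rw [roundVec_eq_update]
  obtain rfl | hne := eq_or_ne i (maxIndex z)
  · rw [Function.update_self, hi, Real.sign_zero, zero_mul]
  · rw [Function.update_of_ne hne, roundDown_eq_zero L hi]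

theorem roundVec_sq [NeZero n] (hz : z ≠ 0) (hz1 : ∑ i, z i ^ 2 ≤ 1) (i : Fin n) :
    roundVec z L i ^ 2 = roundDown z L i ^ 2 +
      (Pi.single (maxIndex z) (1 - ∑ j, roundDown z L j ^ 2) : Fin n → ℝ) i := by
  have hdeficit : 0 ≤ 1 - ∑ j, roundDown z L j ^ 2 :=
    sub_nonneg.mpr ((sum_le_sum fun j _ => roundDown_sq_le z L j).trans hz1)
  rw [roundVec_eq_update]
  obtain rfl | hne := eq_or_ne i (maxIndex z)
  · rw [Function.update_self, Pi.single_eq_same,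
      sign_mul_sqrt_sq (apply_maxIndex_ne_zero hz) (by positivity)]
  · rw [Function.update_of_ne hne, Pi.single_eq_of_ne hne, add_zero]

theorem sum_roundVec_sq [NeZero n] (hz : z ≠ 0) (hz1 : ∑ i, z i ^ 2 ≤ 1) :
    ∑ i, roundVec z L i ^ 2 = 1 := by
  simp only [roundVec_sq L hz hz1, sum_add_distrib, Fintype.sum_pi_single', add_sub_cancel]

variable {L} in
theorem exists_int_roundVec_sq_eq_div [NeZero n] (hz : z ≠ 0) (hz1 : ∑ i, z i ^ 2 ≤ 1)
    (hL : L ≠ 0) (i : Fin n) : ∃ k : ℤ, roundVec z L i ^ 2 = (k : ℝ) / L := by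
  have hdeficit : 1 - ∑ j, roundDown z L j ^ 2 = ((L - ∑ j, ⌊z j ^ 2 * L⌋ : ℤ) : ℝ) / L := by
    simp only [roundDown_sq, ← sum_div]
    push_cast
    rw [sub_div, div_self (Nat.cast_ne_zero.mpr hL)]
  rw [roundVec_sq L hz hz1, hdeficit, roundDown_sq]
  obtain rfl | hne := eq_or_ne i (maxIndex z)
  · exact ⟨_, by rw [Pi.single_eq_same, ← add_div, ← Int.cast_add]⟩
  · exact ⟨_, by rw [Pi.single_eq_of_ne hne, add_zero]⟩

end RoundVec

theorem roundVec_unit_multiples_zero_general {n : ℕ} (z : Fin n → ℝ) (hz0 : z ≠ 0)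
    (hz1 : ∑ i, (z i) ^ 2 ≤ 1) (L : ℕ) (hL : 0 < L) :
    (∑ i, (roundVec z L i) ^ 2 = 1)
    ∧ (∀ i, ∃ k : ℤ, (roundVec z L i) ^ 2 = (k : ℝ) / L)
    ∧ (∀ i, z i = 0 → roundVec z L i = 0) := by
  obtain ⟨i, -⟩ := Function.ne_iff.mp hz0
  have := i.neZero
  exact ⟨sum_roundVec_sq L hz0 hz1, exists_int_roundVec_sq_eq_div hz0 hz1 hL.ne',
    fun _ => roundVec_eq_zero L⟩

/-- For a nonzero unit vector `z ∈ ℝⁿ` and a positive integer `L`: `Round(z, L)` is a unit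
vector, every squared entry of `Round(z, L)` is an integer multiple of `1/L`, and every
index `i` with `z i = 0` satisfies `Round(z, L) i = 0`. -/
theorem roundVec_unit_multiples_zero {n : ℕ} (z : Fin n → ℝ) (hz0 : z ≠ 0)
    (hz1 : ∑ i, (z i) ^ 2 = 1) (L : ℕ) (hL : 0 < L) :
    (∑ i, (roundVec z L i) ^ 2 = 1)
    ∧ (∀ i, ∃ k : ℤ, (roundVec z L i) ^ 2 = (k : ℝ) / L)
    ∧ (∀ i, z i = 0 → roundVec z L i = 0) :=
  roundVec_unit_multiples_zero_general z hz0 hz1.le L hL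
end
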